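/- arXiv:2311.02919 — 2 statements merged into one kernel-verified Lean document; each statement's English description precedes it below -/
import Mathlib

section
/- Let p be a prime. The GL₂(𝔽_p)-representation V_{2p−2}/V*_{2p−2} is the internal direct sum of two subrepresentations: the subrepresentation generated by the class of X^{2p−2}, which is isomorphic to V_{p−1} via the map determined by X^{p−1} ↦ class of X^{2p−2}, and the one-dimensional subspace spanned by the class of X^{2p−2} − X^{p−1}Y^{p−1} + Y^{2p−2}, on which GL₂(𝔽_p) acts trivially (i.e., which is isomorphic to V_0). -/
/-!
Common setup: the symmetric power representations `V_r` of `GL₂(𝔽_p)` realized as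
homogeneous polynomials of degree `r` in `𝔽_p[X,Y]` with the action
`([[a,b],[c,d]]·P)(X,Y) = P(aX+cY, bX+dY)`, the subrepresentation `V_r*` of polynomials
divisible by `X^p Y − X Y^p`, and the quotient representation `V_{2p−2}/V*_{2p−2}`.
-/

set_option synthInstance.maxHeartbeats 1000000
set_option maxHeartbeats 1000000

open MvPolynomial

variable (p : ℕ) [Fact p.Prime]

/-- The action of a 2×2 matrix `M = [[a,b],[c,d]]` on polynomials:
`(M·P)(X,Y) = P(aX+cY, bX+dY)`; the variable `X i` is sent to `Σ_j M j i • X j`. -/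
noncomputable def polyAct (M : Matrix (Fin 2) (Fin 2) (ZMod p)) :
    MvPolynomial (Fin 2) (ZMod p) →ₗ[ZMod p] MvPolynomial (Fin 2) (ZMod p) :=
  (aeval fun i => ∑ j, C (M j i) * X j).toLinearMap

/-- `V_r`: homogeneous polynomials of degree r in 𝔽_p[X,Y]. -/
noncomputable def Vpoly (r : ℕ) : Submodule (ZMod p) (MvPolynomial (Fin 2) (ZMod p)) :=
  homogeneousSubmodule (Fin 2) (ZMod p) r

lemma polyAct_mem (M : Matrix (Fin 2) (Fin 2) (ZMod p)) {r : ℕ}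
    {P : MvPolynomial (Fin 2) (ZMod p)} (hP : P ∈ Vpoly p r) :
    polyAct p M P ∈ Vpoly p r := by
  rw [Vpoly, mem_homogeneousSubmodule] at hP ⊢
  have h := hP.aeval (g := fun i => ∑ j, C (M j i) * X j) (n := 1) ?_
  · rw [one_mul] at h; exact h
  · intro i
    apply MvPolynomial.IsHomogeneous.sum
    intro j _
    simpa using (isHomogeneous_C (Fin 2) (M j i)).mul (isHomogeneous_X (ZMod p) j)

/-- `V_r*`: elements of `V_r` divisible by `X^p Y − X Y^p`. -/
noncomputable def VpolyStar (r : ℕ) : Submodule (ZMod p) (MvPolynomial (Fin 2) (ZMod p)) :=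
  Vpoly p r ⊓ Submodule.restrictScalars (ZMod p)
    (Ideal.span {(X 0 : MvPolynomial (Fin 2) (ZMod p)) ^ p * X 1 - X 0 * X 1 ^ p})

lemma frob (a c : ZMod p) : (C a * X 0 + C c * X 1 : MvPolynomial (Fin 2) (ZMod p)) ^ p
    = C a * X 0 ^ p + C c * X 1 ^ p := by
  have : (C a * X 0 + C c * X 1 : MvPolynomial (Fin 2) (ZMod p)) ^ p
      = (C a * X 0) ^ p + (C c * X 1) ^ p := add_pow_char _ _ _
  rw [this, mul_pow, mul_pow, ← C_pow, ← C_pow, ZMod.pow_card, ZMod.pow_card]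

lemma polyAct_det (M : Matrix (Fin 2) (Fin 2) (ZMod p)) :
    polyAct p M ((X 0 : MvPolynomial (Fin 2) (ZMod p)) ^ p * X 1 - X 0 * X 1 ^ p)
      = C (M 0 0 * M 1 1 - M 1 0 * M 0 1) *
        ((X 0 : MvPolynomial (Fin 2) (ZMod p)) ^ p * X 1 - X 0 * X 1 ^ p) := by
  have h0 : polyAct p M (X 0) = C (M 0 0) * X 0 + C (M 1 0) * X 1 := by
    simp [polyAct, Fin.sum_univ_two]
  have h1 : polyAct p M (X 1) = C (M 0 1) * X 0 + C (M 1 1) * X 1 := by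
    simp [polyAct, Fin.sum_univ_two]
  have hact : ∀ Q R : MvPolynomial (Fin 2) (ZMod p),
      polyAct p M (Q * R) = polyAct p M Q * polyAct p M R := fun Q R => by
    simp [polyAct]
  have hsub : ∀ Q R : MvPolynomial (Fin 2) (ZMod p),
      polyAct p M (Q - R) = polyAct p M Q - polyAct p M R := fun Q R => by
    simp [polyAct]
  have hpow : ∀ (Q : MvPolynomial (Fin 2) (ZMod p)) (n : ℕ),
      polyAct p M (Q ^ n) = polyAct p M Q ^ n := fun Q n => by
    simp [polyAct]
  rw [hsub, hact, hact, hpow, hpow, h0, h1, frob, frob]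
  simp only [map_sub, map_mul]
  ring

lemma polyAct_star_mem (M : Matrix (Fin 2) (Fin 2) (ZMod p)) {r : ℕ}
    {P : MvPolynomial (Fin 2) (ZMod p)} (hP : P ∈ VpolyStar p r) :
    polyAct p M P ∈ VpolyStar p r := by
  rw [VpolyStar, Submodule.mem_inf] at hP ⊢
  obtain ⟨h1, h2⟩ := hP
  refine ⟨polyAct_mem p M h1, ?_⟩
  rw [Submodule.restrictScalars_mem, Ideal.mem_span_singleton] at h2 ⊢
  obtain ⟨Q, hQ⟩ := h2
  refine ⟨C (M 0 0 * M 1 1 - M 1 0 * M 0 1) * polyAct p M Q, ?_⟩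
  have hact : ∀ Q R : MvPolynomial (Fin 2) (ZMod p),
      polyAct p M (Q * R) = polyAct p M Q * polyAct p M R := fun Q R => by
    simp [polyAct]
  rw [hQ, hact, polyAct_det]
  ring

/-- The action of M on `V_r` (the restriction of `polyAct`). -/
noncomputable def actV (r : ℕ) (M : Matrix (Fin 2) (Fin 2) (ZMod p)) :
    Vpoly p r →ₗ[ZMod p] Vpoly p r :=
  (polyAct p M).restrict (fun _ hx => polyAct_mem p M hx)

/-- `V*_{2p−2}` as a submodule of `V_{2p−2}`. -/
noncomputable def VStarIn : Submodule (ZMod p) (Vpoly p (2 * p - 2)) :=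
  (VpolyStar p (2 * p - 2)).comap (Vpoly p (2 * p - 2)).subtype

/-- The quotient representation `V_{2p−2}/V*_{2p−2}`. -/
abbrev Qspace := Vpoly p (2 * p - 2) ⧸ VStarIn p

/-- The action of M on the quotient `V_{2p−2}/V*_{2p−2}`. -/
noncomputable def qAct (M : Matrix (Fin 2) (Fin 2) (ZMod p)) :
    Qspace p →ₗ[ZMod p] Qspace p :=
  Submodule.mapQ (VStarIn p) (VStarIn p) (actV p (2 * p - 2) M)
    (fun x hx => by
      simp only [VStarIn, Submodule.mem_comap] at hx ⊢
      exact polyAct_star_mem p M hx)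

lemma memX0 (n : ℕ) : (X 0 : MvPolynomial (Fin 2) (ZMod p)) ^ n ∈ Vpoly p n := by
  rw [Vpoly, mem_homogeneousSubmodule]
  simpa using (isHomogeneous_X (ZMod p) (0 : Fin 2)).pow n

lemma memc : ((X 0 : MvPolynomial (Fin 2) (ZMod p)) ^ (2 * p - 2)
    - X 0 ^ (p - 1) * X 1 ^ (p - 1) + X 1 ^ (2 * p - 2)) ∈ Vpoly p (2 * p - 2) := by
  have h2 : (2 : ℕ) ≤ p := (Fact.out : p.Prime).two_le
  rw [Vpoly, mem_homogeneousSubmodule]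
  have hX0 : ((X 0 : MvPolynomial (Fin 2) (ZMod p)) ^ (2 * p - 2)).IsHomogeneous (2 * p - 2) := by
    simpa using (isHomogeneous_X (ZMod p) (0 : Fin 2)).pow (2 * p - 2)
  have hX1 : ((X 1 : MvPolynomial (Fin 2) (ZMod p)) ^ (2 * p - 2)).IsHomogeneous (2 * p - 2) := by
    simpa using (isHomogeneous_X (ZMod p) (1 : Fin 2)).pow (2 * p - 2)
  have hmid : ((X 0 : MvPolynomial (Fin 2) (ZMod p)) ^ (p - 1)
      * X 1 ^ (p - 1)).IsHomogeneous (2 * p - 2) := by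
    have h := (((isHomogeneous_X (ZMod p) (0 : Fin 2)).pow (p - 1)).mul
      ((isHomogeneous_X (ZMod p) (1 : Fin 2)).pow (p - 1)))
    have he : 1 * (p - 1) + 1 * (p - 1) = 2 * p - 2 := by omega
    rwa [he] at h
  exact (hX0.sub hmid).add hX1

/-- The class of `X^{2p−2}` in `V_{2p−2}/V*_{2p−2}`. -/
noncomputable def xElt : Qspace p :=
  Submodule.Quotient.mk ⟨(X 0 : MvPolynomial (Fin 2) (ZMod p)) ^ (2 * p - 2), memX0 p (2 * p - 2)⟩

/-- The class of `X^{2p−2} − X^{p−1}Y^{p−1} + Y^{2p−2}` in `V_{2p−2}/V*_{2p−2}`. -/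
noncomputable def cElt : Qspace p :=
  Submodule.Quotient.mk ⟨(X 0 : MvPolynomial (Fin 2) (ZMod p)) ^ (2 * p - 2)
    - X 0 ^ (p - 1) * X 1 ^ (p - 1) + X 1 ^ (2 * p - 2), memc p⟩

/-!
A homogeneous polynomial in two variables vanishes at every point of `𝔽_p²` exactly when
`X^p Y − X Y^p` divides it, so classes in `V_{2p−2}/V*_{2p−2}` can be compared as functions `f` on
`𝔽_p²`, and these satisfy `f (t w) = t^{p−1} f w`. For such functions the kernel
`(v₁w₀ − v₀w₁)^{p−1}`, which is the indicator of `v ∉ 𝔽_p w` when `w ≠ 0`, gives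
`∑_v f v (v₁w₀ − v₀w₁)^{p−1} = f w + ∑_v f v` for `w ≠ 0`: sum over all `v` and subtract the line
`𝔽_p w`, which contributes `−f w`. Hence if the values of `f` sum to zero, then `f` is the
evaluation of the combination `∑_v f v [(v₁X − v₀Y)^{2p−2}]` of `GL₂`-translates of `[X^{2p−2}]`.
The values of a polynomial of degree `p − 1` do sum to zero, which embeds `V_{p−1}` as the
hyperplane of classes whose values sum to zero. The class of
`X^{2p−2} − X^{p−1}Y^{p−1} + Y^{2p−2}` is the indicator of the nonzero vectors, with sum
`p² − 1 = −1` in `𝔽_p`, so it spans a complement.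
-/

section Homogeneous

variable {σ R : Type*}

lemma eval_smul_of_isHomogeneous [CommSemiring R] {F : MvPolynomial σ R} {n : ℕ}
    (hF : F.IsHomogeneous n) (t : R) (w : σ → R) : eval (t • w) F = t ^ n * eval w F := by
  rw [eval_eq, eval_eq, Finset.mul_sum]
  refine Finset.sum_congr rfl fun d hd => ?_
  have hdeg : ∑ i ∈ d.support, d i = n := by
    rw [← Finsupp.degree_apply, Finsupp.degree_eq_weight_one]
    exact hF (mem_support_iff.1 hd)
  simp only [Pi.smul_apply, smul_eq_mul, mul_pow, Finset.prod_mul_distrib,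
    Finset.prod_pow_eq_pow_sum, hdeg]
  ring

lemma isHomogeneous_C_mul_X_sub_C_mul_X [CommRing R] (a b : R) (i j : σ) :
    (C a * X i - C b * X j : MvPolynomial σ R).IsHomogeneous 1 :=
  ((isHomogeneous_X R i).C_mul a).sub ((isHomogeneous_X R j).C_mul b)

lemma eval_homogenize_one_zero [CommSemiring R] (f : Polynomial R) (n : ℕ) :
    eval ![1, 0] (f.homogenize n) = f.coeff n := by
  rw [Polynomial.homogenize, map_sum, Finset.sum_eq_single (n, 0)]
  · simp [eval_monomial, Finsupp.prod_fintype]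
  · rintro ⟨i, j⟩ hij hne
    have hj : j ≠ 0 := by
      rintro rfl
      exact hne (Prod.ext (Finset.HasAntidiagonal.mem_antidiagonal.1 hij) rfl)
    simp [eval_monomial, Finsupp.prod_fintype, hj]
  · simp

lemma homogenize_X_pow_sub_X [CommRing R] (n : ℕ) :
    (Polynomial.X ^ n - Polynomial.X : Polynomial R).homogenize (n + 1) =
      X 0 ^ n * X 1 - X 0 * X 1 ^ n := by
  rw [Polynomial.homogenize_sub, Polynomial.homogenize_X_pow n.le_succ,
    Polynomial.homogenize_X n.succ_ne_zero]
  simp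

variable {K : Type*} [Field K] [Fintype K]

lemma X_pow_card_sub_X_dvd_of_forall_eval_eq_zero {f : Polynomial K} (hf : ∀ x, f.eval x = 0) :
    Polynomial.X ^ Fintype.card K - Polynomial.X ∣ f := by
  set h : Polynomial K := Polynomial.X ^ Fintype.card K - Polynomial.X
  have hh : h.Monic := Polynomial.monic_X_pow_sub (by simpa using Fintype.one_lt_card)
  have hdeg : h.degree = Fintype.card K := by
    rw [Polynomial.degree_eq_natDegree hh.ne_zero,
      FiniteField.X_pow_card_sub_X_natDegree_eq K Fintype.one_lt_card]
  rw [← Polynomial.modByMonic_eq_zero_iff_dvd hh]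
  refine Polynomial.eq_zero_of_degree_lt_of_eval_finset_eq_zero Finset.univ
    (by simpa only [Finset.card_univ, hdeg] using Polynomial.degree_modByMonic_lt f hh)
    fun x _ => ?_
  rw [Polynomial.modByMonic_eq_sub_mul_div, Polynomial.eval_sub, Polynomial.eval_mul, hf]
  simp [h, FiniteField.pow_card]

theorem dvd_iff_forall_eval_eq_zero_of_isHomogeneous {F : MvPolynomial (Fin 2) K} {n : ℕ}
    (hF : F.IsHomogeneous n) :
    X 0 ^ Fintype.card K * X 1 - X 0 * X 1 ^ Fintype.card K ∣ F ↔ ∀ w, eval w F = 0 := by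
  have hq : 1 < Fintype.card K := Fintype.one_lt_card
  refine ⟨?_, fun h => ?_⟩
  · rintro ⟨G, rfl⟩ w
    simp [FiniteField.pow_card]
  obtain ⟨f, rfl, hfdeg⟩ : ∃ f : Polynomial K, f.homogenize n = F ∧ f.natDegree ≤ n :=
    ⟨_, Polynomial.homogenize_eq_of_isHomogeneous hF rfl, by
      simpa using aeval_natDegree_le F hF.totalDegree_le ![Polynomial.X, 1] (n := 1)
        (Fin.forall_fin_two.2 ⟨Polynomial.natDegree_X_le, by simp⟩)⟩
  have hroots (x : K) : f.eval x = 0 := by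
    simpa [Polynomial.eval_homogenize hfdeg] using h ![x, 1]
  have htop : f.natDegree ≤ n - 1 :=
    Polynomial.natDegree_le_pred hfdeg (by rw [← eval_homogenize_one_zero, h])
  obtain ⟨g, rfl⟩ := X_pow_card_sub_X_dvd_of_forall_eval_eq_zero hroots
  obtain rfl | hg := eq_or_ne g 0
  · simp
  rw [Polynomial.natDegree_mul (FiniteField.X_pow_card_sub_X_ne_zero K hq) hg,
    FiniteField.X_pow_card_sub_X_natDegree_eq K hq] at htop
  obtain ⟨m, rfl⟩ : ∃ m, n = (Fintype.card K + 1) + m := Nat.exists_eq_add_of_le (by omega)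
  rw [Polynomial.homogenize_mul _ _ _ (by omega), homogenize_X_pow_sub_X]
  · exact dvd_mul_right _ _
  · rw [FiniteField.X_pow_card_sub_X_natDegree_eq K hq]
    omega

end Homogeneous

section FiniteField

variable {K : Type*} [Field K]

lemma exists_smul_eq_iff_mul_sub_mul_eq_zero {v w : Fin 2 → K} (hw : w ≠ 0) :
    (∃ t : K, t • w = v) ↔ v 1 * w 0 - v 0 * w 1 = 0 := by
  rw [← not_iff_not, not_exists, ← LinearIndependent.pair_iff' hw]
  have hdet : v 1 * w 0 - v 0 * w 1 = (Matrix.of ![w, v]).det := by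
    rw [Matrix.det_fin_two]
    exact congrArg₂ _ (mul_comm _ _) (mul_comm _ _)
  rw [hdet, ← ne_eq, ← isUnit_iff_ne_zero, ← Matrix.isUnit_iff_isUnit_det,
    ← Matrix.linearIndependent_rows_iff_isUnit]
  rfl

lemma exists_generalLinearGroup_col_zero_eq {u : Fin 2 → K} (hu : u ≠ 0) :
    ∃ g : GL (Fin 2) K, ∀ i, g i 0 = u i := by
  obtain ⟨s, t, hst⟩ : ∃ s t, u 0 * t - s * u 1 ≠ 0 := by
    by_cases h0 : u 0 = 0
    · have h1 : u 1 ≠ 0 := fun h1 => hu (funext (Fin.forall_fin_two.2 ⟨h0, h1⟩))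
      exact ⟨1, 0, by simpa using h1⟩
    · exact ⟨0, 1, by simpa using h0⟩
  exact ⟨.mkOfDetNeZero !![u 0, s; u 1, t] (by rwa [Matrix.det_fin_two_of]),
    Fin.forall_fin_two.2 ⟨rfl, rfl⟩⟩

lemma isCompl_ker_span_singleton {V : Type*} [AddCommGroup V] [Module K V] {f : V →ₗ[K] K} {x : V}
    (hx : f x ≠ 0) : IsCompl (LinearMap.ker f) (Submodule.span K {x}) where
  disjoint := (Submodule.disjoint_span_singleton' fun h => hx (by rw [h, map_zero])).2 hx
  codisjoint := by
    rw [codisjoint_iff, sup_comm]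
    exact LinearMap.span_singleton_sup_ker_eq_top f hx

lemma sum_ite_eq_zero_zero_one {V : Type*} [AddCommGroup V] [Module K V] [Nontrivial V]
    [Fintype V] [DecidableEq V] :
    ∑ v : V, (if v = 0 then 0 else 1 : K) = -1 := by
  obtain ⟨v, hv⟩ := exists_ne (0 : V)
  have hcard : (Fintype.card V : K) = 0 := by
    have := card_nsmul_eq_zero (x := v)
    rw [← Nat.cast_smul_eq_nsmul K] at this
    exact (smul_eq_zero.1 this).resolve_right hv
  calc ∑ v : V, (if v = 0 then 0 else 1 : K)
      = ∑ v : V, (1 - if v = 0 then 1 else 0) :=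
        Finset.sum_congr rfl fun v _ => by split_ifs <;> simp
    _ = -1 := by simp [hcard]

variable [Fintype K]

lemma pow_card_sub_one_eq_ite [DecidableEq K] (x : K) :
    x ^ (Fintype.card K - 1) = if x = 0 then 0 else 1 := by
  have hq : 1 < Fintype.card K := Fintype.one_lt_card
  split_ifs with hx
  · rw [hx, zero_pow (by omega)]
  · exact FiniteField.pow_card_sub_one_eq_one x hx

lemma pow_two_mul_card_sub_two (x : K) :
    x ^ (2 * Fintype.card K - 2) = x ^ (Fintype.card K - 1) := by
  classical
  rw [← Nat.mul_sub_one, mul_comm, pow_mul, pow_card_sub_one_eq_ite]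
  split_ifs <;> simp

lemma sub_mul_add_pow_card_sub_one_eq_ite [DecidableEq K] (w : Fin 2 → K) :
    w 0 ^ (Fintype.card K - 1) - w 0 ^ (Fintype.card K - 1) * w 1 ^ (Fintype.card K - 1)
      + w 1 ^ (Fintype.card K - 1) = if w = 0 then 0 else 1 := by
  simp only [pow_card_sub_one_eq_ite, funext_iff, Fin.forall_fin_two, Pi.zero_apply, ite_and]
  split_ifs <;> simp

lemma sum_smul_eq_neg {V : Type*} [AddCommGroup V] [Module K V] {f : V → K}
    (hf : ∀ (t : K) w, f (t • w) = t ^ (Fintype.card K - 1) * f w) (w : V) :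
    ∑ t : K, f (t • w) = -f w := by
  classical
  simp_rw [hf, ← Finset.sum_mul, pow_card_sub_one_eq_ite, sum_ite_eq_zero_zero_one, neg_one_mul]

theorem sum_mul_pow_card_sub_one [DecidableEq K] {f : (Fin 2 → K) → K}
    (hf : ∀ (t : K) w, f (t • w) = t ^ (Fintype.card K - 1) * f w) (w : Fin 2 → K) :
    ∑ v, f v * (v 1 * w 0 - v 0 * w 1) ^ (Fintype.card K - 1) =
      f w + (∑ v, f v) * if w = 0 then 0 else 1 := by
  simp only [pow_card_sub_one_eq_ite]
  obtain rfl | hw := eq_or_ne w 0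
  · have hf0 : f 0 = 0 := by simpa [pow_card_sub_one_eq_ite] using hf 0 0
    simp [hf0]
  have hline : ∑ v with v 1 * w 0 - v 0 * w 1 = 0, f v = -f w := by
    rw [← sum_smul_eq_neg hf w, ← Finset.sum_image (g := fun t : K => t • w) (f := f)
      fun a _ b _ h => smul_left_injective K hw h]
    congr 1
    ext v
    simp [exists_smul_eq_iff_mul_sub_mul_eq_zero hw]
  rw [if_neg hw, mul_one, ← Finset.sum_filter_add_sum_filter_not Finset.univ
    (fun v : Fin 2 → K => v 1 * w 0 - v 0 * w 1 = 0) f, hline]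
  simp [Finset.sum_filter]

end FiniteField

section Evaluation

open scoped Matrix

/-- The function on `𝔽_p²` defined by a polynomial in `V_r`; `w` is a row vector `(X, Y)`, so that
a matrix acts on functions by `w ↦ w ᵥ* M`. -/
noncomputable def evalVpoly (r : ℕ) : Vpoly p r →ₗ[ZMod p] (Fin 2 → ZMod p) → ZMod p :=
  (evalₗ (ZMod p) (Fin 2)).domRestrict (Vpoly p r)

lemma evalVpoly_apply {r : ℕ} (F : Vpoly p r) (w : Fin 2 → ZMod p) :
    evalVpoly p r F w = eval w F.1 := rfl

lemma evalVpoly_smul {r : ℕ} (F : Vpoly p r) (t : ZMod p) (w : Fin 2 → ZMod p) :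
    evalVpoly p r F (t • w) = t ^ r * evalVpoly p r F w :=
  eval_smul_of_isHomogeneous F.2 t w

lemma evalVpoly_actV {r : ℕ} (M : Matrix (Fin 2) (Fin 2) (ZMod p)) (F : Vpoly p r)
    (w : Fin 2 → ZMod p) : evalVpoly p r (actV p r M F) w = evalVpoly p r F (w ᵥ* M) := by
  change eval w (aeval _ F.1) = eval (w ᵥ* M) F.1
  rw [map_aeval, coe_eval₂Hom, eval]
  congr 1
  · ext
    simp
  · funext i
    simp [Matrix.vecMul, dotProduct, mul_comm]

lemma evalVpoly_injective {r : ℕ} (hr : r ≤ p) : Function.Injective (evalVpoly p r) :=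
  fun F G h => Subtype.ext <| IsHomogeneous.funext_of_le_card F.2 G.2 (congrFun h) (by
    simpa [ZMod.card] using hr)

lemma sum_evalVpoly {r : ℕ} (hr : r < 2 * p - 2) (F : Vpoly p r) :
    ∑ w, evalVpoly p r F w = 0 :=
  sum_eval_eq_zero F.1 <| (IsHomogeneous.totalDegree_le F.2).trans_lt <| by
    rw [ZMod.card, Fintype.card_fin]
    omega

lemma ker_evalVpoly : LinearMap.ker (evalVpoly p (2 * p - 2)) = VStarIn p := by
  ext F
  have hdvd := dvd_iff_forall_eval_eq_zero_of_isHomogeneous (F := F.1) F.2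
  rw [ZMod.card] at hdvd
  simp only [VStarIn, VpolyStar, Submodule.mem_comap, Submodule.mem_inf, Submodule.subtype_apply,
    F.2, true_and, Submodule.restrictScalars_mem, Ideal.mem_span_singleton, hdvd,
    LinearMap.mem_ker, funext_iff, evalVpoly_apply, Pi.zero_apply]

/-- The function on `𝔽_p²` defined by a class in `V_{2p−2}/V*_{2p−2}`: two representatives differ
by a multiple of `X^p Y − X Y^p`, which vanishes at every point. Equalities between classes are
proved by comparing these functions. -/
noncomputable def evalQspace : Qspace p →ₗ[ZMod p] (Fin 2 → ZMod p) → ZMod p :=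
  (VStarIn p).liftQ (evalVpoly p (2 * p - 2)) (ker_evalVpoly p).ge

lemma evalQspace_mk (F : Vpoly p (2 * p - 2)) :
    evalQspace p (Submodule.Quotient.mk F) = evalVpoly p (2 * p - 2) F := rfl

lemma evalQspace_injective : Function.Injective (evalQspace p) :=
  LinearMap.ker_eq_bot.1 (Submodule.ker_liftQ_eq_bot _ _ _ (ker_evalVpoly p).le)

lemma evalQspace_qAct (M : Matrix (Fin 2) (Fin 2) (ZMod p)) (q : Qspace p) (w : Fin 2 → ZMod p) :
    evalQspace p (qAct p M q) w = evalQspace p q (w ᵥ* M) := by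
  obtain ⟨F, rfl⟩ := Submodule.Quotient.mk_surjective _ q
  exact evalVpoly_actV p M F w

lemma pow_two_mul_sub_two (x : ZMod p) : x ^ (2 * p - 2) = x ^ (p - 1) := by
  simpa only [ZMod.card] using pow_two_mul_card_sub_two x

lemma evalQspace_smul (q : Qspace p) (t : ZMod p) (w : Fin 2 → ZMod p) :
    evalQspace p q (t • w) = t ^ (p - 1) * evalQspace p q w := by
  obtain ⟨F, rfl⟩ := Submodule.Quotient.mk_surjective _ q
  rw [evalQspace_mk, evalVpoly_smul, pow_two_mul_sub_two]

lemma evalQspace_xElt (w : Fin 2 → ZMod p) : evalQspace p (xElt p) w = w 0 ^ (p - 1) := by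
  rw [xElt, evalQspace_mk, evalVpoly_apply, map_pow, eval_X, pow_two_mul_sub_two]

lemma evalQspace_cElt (w : Fin 2 → ZMod p) :
    evalQspace p (cElt p) w = if w = 0 then 0 else 1 := by
  rw [← sub_mul_add_pow_card_sub_one_eq_ite, cElt, evalQspace_mk, evalVpoly_apply, ZMod.card]
  simp only [map_add, map_sub, map_mul, map_pow, eval_X, pow_two_mul_sub_two]

lemma qAct_cElt (g : GL (Fin 2) (ZMod p)) : qAct p g (cElt p) = cElt p := by
  refine evalQspace_injective p (funext fun w => ?_)
  have hw : w ᵥ* (g : Matrix (Fin 2) (Fin 2) (ZMod p)) = 0 ↔ w = 0 :=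
    (Matrix.vecMul_injective_of_isUnit g.isUnit).eq_iff' (Matrix.zero_vecMul _)
  simp only [evalQspace_qAct, evalQspace_cElt, hw]

end Evaluation

section Decomposition

/-- The power `(v₁X − v₀Y)^r`, whose value at `w` is the `r`-th power of the determinant pairing
of `v` and `w`. -/
noncomputable def linFormPow (r : ℕ) (v : Fin 2 → ZMod p) : Vpoly p r :=
  ⟨(C (v 1) * X 0 - C (v 0) * X 1) ^ r, by
    rw [Vpoly, mem_homogeneousSubmodule]
    simpa only [one_mul] using (isHomogeneous_C_mul_X_sub_C_mul_X (v 1) (v 0) 0 1).pow r⟩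

lemma evalVpoly_linFormPow (r : ℕ) (v w : Fin 2 → ZMod p) :
    evalVpoly p r (linFormPow p r v) w = (v 1 * w 0 - v 0 * w 1) ^ r := by
  simp [evalVpoly_apply, linFormPow]

/-- The class of `(v₁X − v₀Y)^{2p−2}` in `V_{2p−2}/V*_{2p−2}`; for `v ≠ 0` these are the
`GL₂(𝔽_p)`-translates of the class of `X^{2p−2}`. -/
noncomputable def linFormPowClass (v : Fin 2 → ZMod p) : Qspace p :=
  Submodule.Quotient.mk (linFormPow p (2 * p - 2) v)

lemma evalQspace_linFormPowClass (v w : Fin 2 → ZMod p) :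
    evalQspace p (linFormPowClass p v) w = (v 1 * w 0 - v 0 * w 1) ^ (p - 1) := by
  rw [linFormPowClass, evalQspace_mk, evalVpoly_linFormPow, pow_two_mul_sub_two]

lemma linFormPowClass_zero : linFormPowClass p 0 = 0 := by
  have hp := (Fact.out : p.Prime).one_lt
  refine evalQspace_injective p (funext fun w => ?_)
  rw [evalQspace_linFormPowClass, map_zero]
  simp [Nat.sub_ne_zero_of_lt hp]

lemma exists_qAct_xElt_eq_linFormPowClass {v : Fin 2 → ZMod p} (hv : v ≠ 0) :
    ∃ g : GL (Fin 2) (ZMod p), qAct p g (xElt p) = linFormPowClass p v := by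
  have hu : ![v 1, -v 0] ≠ 0 := fun h =>
    hv (funext (Fin.forall_fin_two.2 ⟨by simpa using congrFun h 1, by simpa using congrFun h 0⟩))
  obtain ⟨g, hg⟩ := exists_generalLinearGroup_col_zero_eq hu
  refine ⟨g, evalQspace_injective p (funext fun w => ?_)⟩
  rw [evalQspace_qAct, evalQspace_xElt, evalQspace_linFormPowClass]
  congr 1
  simp only [Matrix.vecMul, dotProduct, Fin.sum_univ_two, hg]
  simp [sub_eq_add_neg, mul_comm]

theorem evalQspace_sum_smul_linFormPowClass {f : (Fin 2 → ZMod p) → ZMod p}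
    (hf : ∀ (t : ZMod p) w, f (t • w) = t ^ (p - 1) * f w) :
    evalQspace p (∑ v, f v • linFormPowClass p v) = f + (∑ v, f v) • evalQspace p (cElt p) := by
  ext w
  have h := sum_mul_pow_card_sub_one (f := f) (by simpa only [ZMod.card] using hf) w
  simpa [evalQspace_linFormPowClass, evalQspace_cElt] using h

/-- The embedding of the Steinberg representation `V_{p−1}` into `V_{2p−2}/V*_{2p−2}`, given by
`P ↦ ∑_v P(v) [(v₁X − v₀Y)^{2p−2}]`. It sends `P` to the class with the same values as `P`. -/
noncomputable def steinbergEmbedding : Vpoly p (p - 1) →ₗ[ZMod p] Qspace p :=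
  Fintype.linearCombination (ZMod p) (linFormPowClass p) ∘ₗ evalVpoly p (p - 1)

lemma evalQspace_steinbergEmbedding (P : Vpoly p (p - 1)) :
    evalQspace p (steinbergEmbedding p P) = evalVpoly p (p - 1) P := by
  have hp := (Fact.out : p.Prime).two_le
  rw [steinbergEmbedding, LinearMap.comp_apply, Fintype.linearCombination_apply,
    evalQspace_sum_smul_linFormPowClass p (evalVpoly_smul p P), sum_evalVpoly p (by omega),
    zero_smul, add_zero]

lemma steinbergEmbedding_injective : Function.Injective (steinbergEmbedding p) := by
  refine .of_comp (f := evalQspace p) ?_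
  convert evalVpoly_injective p (Nat.sub_le p 1)
  exact funext (evalQspace_steinbergEmbedding p)

lemma steinbergEmbedding_actV (M : Matrix (Fin 2) (Fin 2) (ZMod p)) (P : Vpoly p (p - 1)) :
    steinbergEmbedding p (actV p (p - 1) M P) = qAct p M (steinbergEmbedding p P) := by
  refine evalQspace_injective p (funext fun w => ?_)
  simp only [evalQspace_qAct, evalQspace_steinbergEmbedding, evalVpoly_actV]

lemma steinbergEmbedding_X_pow :
    steinbergEmbedding p ⟨X 0 ^ (p - 1), memX0 p (p - 1)⟩ = xElt p := by
  refine evalQspace_injective p (funext fun w => ?_)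
  rw [evalQspace_steinbergEmbedding, evalQspace_xElt, evalVpoly_apply, map_pow, eval_X]

lemma steinbergEmbedding_linFormPow (v : Fin 2 → ZMod p) :
    steinbergEmbedding p (linFormPow p (p - 1) v) = linFormPowClass p v := by
  refine evalQspace_injective p (funext fun w => ?_)
  rw [evalQspace_steinbergEmbedding, evalQspace_linFormPowClass, evalVpoly_linFormPow]

/-- The sum of the values of a class at the points of `𝔽_p²`: the linear functional whose kernel is
the copy of `V_{p−1}`. -/
noncomputable def sumValues : Qspace p →ₗ[ZMod p] ZMod p :=
  (∑ w, LinearMap.proj w) ∘ₗ evalQspace p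

lemma sumValues_apply (q : Qspace p) : sumValues p q = ∑ w, evalQspace p q w := by
  simp [sumValues]

lemma sumValues_cElt : sumValues p (cElt p) = -1 := by
  simp only [sumValues_apply, evalQspace_cElt]
  exact sum_ite_eq_zero_zero_one

lemma range_steinbergEmbedding_eq_ker_sumValues :
    LinearMap.range (steinbergEmbedding p) = LinearMap.ker (sumValues p) := by
  have hp := (Fact.out : p.Prime).two_le
  apply le_antisymm
  · rintro _ ⟨P, rfl⟩
    rw [LinearMap.mem_ker, sumValues_apply, evalQspace_steinbergEmbedding,
      sum_evalVpoly p (by omega)]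
  · intro q hq
    rw [LinearMap.mem_ker, sumValues_apply] at hq
    have hexpand : q = ∑ v, evalQspace p q v • linFormPowClass p v := evalQspace_injective p <| by
      rw [evalQspace_sum_smul_linFormPowClass p (evalQspace_smul p q), hq, zero_smul, add_zero]
    rw [hexpand]
    exact sum_mem fun v _ => Submodule.smul_mem _ _ ⟨_, steinbergEmbedding_linFormPow p v⟩

lemma isCompl_range_steinbergEmbedding_span_cElt :
    IsCompl (LinearMap.range (steinbergEmbedding p)) (Submodule.span (ZMod p) {cElt p}) := by
  rw [range_steinbergEmbedding_eq_ker_sumValues]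
  exact isCompl_ker_span_singleton (by simp [sumValues_cElt])

lemma range_steinbergEmbedding_le {W : Submodule (ZMod p) (Qspace p)}
    (hW : ∀ g : GL (Fin 2) (ZMod p), ∀ x ∈ W, qAct p g x ∈ W) (hx : xElt p ∈ W) :
    LinearMap.range (steinbergEmbedding p) ≤ W := by
  rintro _ ⟨P, rfl⟩
  refine sum_mem fun v _ => W.smul_mem _ ?_
  obtain rfl | hv := eq_or_ne v 0
  · rw [linFormPowClass_zero]
    exact W.zero_mem
  · obtain ⟨g, hg⟩ := exists_qAct_xElt_eq_linFormPowClass p hv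
    exact hg ▸ hW g _ hx

lemma cElt_ne_zero : cElt p ≠ 0 := fun h => by
  simpa [h] using sumValues_cElt p

end Decomposition

/-- `V_{2p−2}/V*_{2p−2}` is the internal direct sum of the
subrepresentation generated by the class of `X^{2p−2}` — a copy of `V_{p−1}` via
`X^{p−1} ↦ X^{2p−2}` — and the one-dimensional trivial subrepresentation spanned by the
class of `X^{2p−2} − X^{p−1}Y^{p−1} + Y^{2p−2}`. -/
theorem stmt1 (p : ℕ) [Fact p.Prime] :
    ∃ ι : Vpoly p (p - 1) →ₗ[ZMod p] Qspace p,
      -- ι is an embedding of V_{p−1}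
      Function.Injective ι ∧
      -- equivariant for every g ∈ GL₂(𝔽_p)
      (∀ (g : GL (Fin 2) (ZMod p)) (P : Vpoly p (p - 1)),
        ι (actV p (p - 1) (g : Matrix (Fin 2) (Fin 2) (ZMod p)) P) =
          qAct p (g : Matrix (Fin 2) (Fin 2) (ZMod p)) (ι P)) ∧
      -- determined by X^{p−1} ↦ class of X^{2p−2}
      ι ⟨(X 0 : MvPolynomial (Fin 2) (ZMod p)) ^ (p - 1), memX0 p (p - 1)⟩ = xElt p ∧
      -- its image is the subrepresentation generated by the class of X^{2p−2}
      (∀ W : Submodule (ZMod p) (Qspace p),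
        (∀ (g : GL (Fin 2) (ZMod p)), ∀ x ∈ W, qAct p (g : Matrix (Fin 2) (Fin 2) (ZMod p)) x ∈ W) →
        xElt p ∈ W → LinearMap.range ι ≤ W) ∧
      -- the complement is the line spanned by the class of X^{2p−2} − X^{p−1}Y^{p−1} + Y^{2p−2},
      cElt p ≠ 0 ∧
      -- on which GL₂(𝔽_p) acts trivially,
      (∀ g : GL (Fin 2) (ZMod p), qAct p (g : Matrix (Fin 2) (Fin 2) (ZMod p)) (cElt p) = cElt p) ∧
      -- and the two pieces form an internal direct sum decomposition
      LinearMap.range ι ⊓ Submodule.span (ZMod p) {cElt p} = ⊥ ∧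
      LinearMap.range ι ⊔ Submodule.span (ZMod p) {cElt p} = ⊤ := by
  have hcompl := isCompl_range_steinbergEmbedding_span_cElt p
  exact ⟨steinbergEmbedding p, steinbergEmbedding_injective p,
    fun g P => steinbergEmbedding_actV p g P, steinbergEmbedding_X_pow p,
    fun W hW hx => range_steinbergEmbedding_le p hW hx, cElt_ne_zero p, qAct_cElt p,
    hcompl.inf_eq_bot, hcompl.sup_eq_top⟩
end

section
/- Let p be a prime. The representation V_{p−1} (the (p−1)-st symmetric power of the standard two-dimensional representation of GL₂(𝔽_p) over 𝔽_p) is a projective module over the group algebra 𝔽_p[GL₂(𝔽_p)]. -/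
/-!
Setup: the symmetric power representation `V_{p−1}` of `GL₂(𝔽_p)`, realized as the
homogeneous polynomials of degree `p−1` in `𝔽_p[X,Y]` with the action
`([[a,b],[c,d]]·P)(X,Y) = P(aX+cY, bX+dY)`, viewed as a module over the group algebra
`𝔽_p[GL₂(𝔽_p)]` via `Representation.asModule`.
-/

set_option synthInstance.maxHeartbeats 1000000
set_option maxHeartbeats 1000000

open MvPolynomial

variable (p : ℕ) [Fact p.Prime]

lemma polyAct_one : polyAct p 1 = LinearMap.id := by
  apply LinearMap.ext; intro P
  have hs : (fun i : Fin 2 => ∑ j, C ((1 : Matrix (Fin 2) (Fin 2) (ZMod p)) j i) * X j)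
      = X := by
    funext i
    rw [Fin.sum_univ_two]
    fin_cases i <;> simp [Matrix.one_apply]
  show (aeval fun i => ∑ j, C ((1 : Matrix (Fin 2) (Fin 2) (ZMod p)) j i) * X j) P = P
  rw [hs, aeval_X_left_apply]

lemma polyAct_mul (M N : Matrix (Fin 2) (Fin 2) (ZMod p)) :
    polyAct p (M * N) = polyAct p M ∘ₗ polyAct p N := by
  have key : (aeval fun i => ∑ j, C ((M * N) j i) * X j :
        MvPolynomial (Fin 2) (ZMod p) →ₐ[ZMod p] MvPolynomial (Fin 2) (ZMod p))
      = (aeval fun i => ∑ j, C (M j i) * X j).comp (aeval fun i => ∑ j, C (N j i) * X j) := by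
    apply MvPolynomial.algHom_ext
    intro i
    simp [Fin.sum_univ_two, Matrix.mul_apply, map_add, map_mul]
    ring
  apply LinearMap.ext; intro P
  show (aeval fun i => ∑ j, C ((M * N) j i) * X j) P = _
  rw [key]
  rfl

/-- `V_{p−1}` as a representation of `GL₂(𝔽_p)` over `𝔽_p`. -/
noncomputable def rhoV : Representation (ZMod p) (GL (Fin 2) (ZMod p)) (Vpoly p (p - 1)) where
  toFun g := actV p (p - 1) (g : Matrix (Fin 2) (Fin 2) (ZMod p))
  map_one' := by
    apply LinearMap.ext; intro x
    apply Subtype.ext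
    show polyAct p ((1 : GL (Fin 2) (ZMod p)) : Matrix (Fin 2) (Fin 2) (ZMod p)) (x : _) = (x : _)
    rw [Units.val_one, polyAct_one]
    rfl
  map_mul' g h := by
    apply LinearMap.ext; intro x
    apply Subtype.ext
    show polyAct p ((g * h : GL (Fin 2) (ZMod p)) : Matrix (Fin 2) (Fin 2) (ZMod p)) (x : _) = _
    rw [Units.val_mul, polyAct_mul]
    rfl

/-!
Write `q = |K|`. By Higman's criterion, a representation over `K` is projective as soon as the
identity is a sum of conjugates `∑ g, ρ(g)⁻¹ T ρ(g)` of some endomorphism `T`. On the forms of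
degree `q - 1` in two variables take `T P = P(1, 0) X ^ (q - 1)`. By Cramer's rule, and since
`x ^ (q - 1)` is `1` for `x ≠ 0` and `0` for `x = 0`, the value at `z` of this sum applied to `P` is
`∑ u v, det(u, v) ^ (q - 1) * det(z, v) ^ (q - 1) * P(u)`, where `u` and `v` are the rows of `g`.
Now `det(z, u) ^ (q - 1)` is a reproducing kernel for these forms,
`∑ u, det(z, u) ^ (q - 1) * P(u) = P(z)`: for `z ≠ 0` it is `1` minus the indicator of the line
through `z`, the sum of `P` over the plane vanishes for degree reasons, and its sum over the line is
`-P(z)`. The kernel is itself such a form, so the sum over `v` equals `det(z, u) ^ (q - 1)`, and the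
sum over `u` is then `P(z)`.
-/

open Matrix TensorProduct

open scoped MonoidAlgebra

section Higman

variable {k G V : Type*} [CommRing k] [Group G] [Fintype G] [AddCommGroup V] [Module k V]
  [Module.Projective k V]

theorem projective_of_sumOfConjugates_eq_id [Module k[G] V] [IsScalarTower k k[G] V]
    (T : V →ₗ[k] V) (hT : T.sumOfConjugates G = .id) : Module.Projective k[G] V := by
  let ι : V →ₗ[k] k[G] ⊗[k] V := TensorProduct.mk k k[G] V 1 ∘ₗ T
  let π : k[G] ⊗[k] V →ₗ[k[G]] V :=
    AlgebraTensorModule.lift (LinearMap.toSpanSingleton k[G] (V →ₗ[k] V) .id)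
  have π_ι v : π (ι v) = T v := by simp [π, ι]
  refine .of_split (ι.sumOfConjugatesEquivariant G) π (LinearMap.ext fun v => ?_)
  calc π (ι.sumOfConjugatesEquivariant G v)
      = T.sumOfConjugates G v := by
        simp only [LinearMap.sumOfConjugatesEquivariant_apply, LinearMap.sumOfConjugates_apply,
          LinearMap.conjugate_apply, map_sum, map_smul, π_ι]
    _ = v := LinearMap.congr_fun hT v

theorem projective_asModule_of_sum_conj_eq_one (ρ : Representation k G V) (T : Module.End k V)
    (hT : ∑ g, ρ g⁻¹ * T * ρ g = 1) : Module.Projective k[G] ρ.asModule := by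
  have : Module.Projective k ρ.asModule := .of_equiv ρ.asModuleEquiv.symm
  refine projective_of_sumOfConjugates_eq_id
    (ρ.asModuleEquiv.symm.toLinearMap ∘ₗ T ∘ₗ ρ.asModuleEquiv.toLinearMap)
    (LinearMap.ext fun v => Eq.trans ?_ (LinearMap.congr_fun hT (ρ.asModuleEquiv v)))
  rw [LinearMap.sumOfConjugates_apply, LinearMap.sum_apply]
  simp only [LinearMap.conjugate_apply, Representation.single_smul, one_smul]
  rfl

end Higman

section Sums

variable {A : Type*} [AddCommMonoid A]

theorem sum_units_eq_sum {M : Type*} [Monoid M] [Fintype M] [Fintype Mˣ] (f : M → A)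
    (hf : ∀ m, ¬IsUnit m → f m = 0) : ∑ u : Mˣ, f u = ∑ m, f m :=
  Finset.sum_of_injOn Units.val Units.val_injective.injOn (by simp)
    (fun m _ hm => hf m fun ⟨u, hu⟩ => hm ⟨u, by simp, hu⟩) (by simp)

theorem sum_matrix_fin_two {n R : Type*} [Fintype n] [DecidableEq n] [Fintype R]
    (f : Matrix (Fin 2) n R → A) : ∑ M, f M = ∑ u, ∑ v, f (of ![u, v]) := by
  rw [← Fintype.sum_prod_type' fun u v => f (of ![u, v])]
  exact (((finTwoArrowEquiv (n → R)).symm.trans of).sum_comp f).symm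

theorem sum_filter_det_eq_zero {K : Type*} [Field K] [Fintype K] [DecidableEq K]
    {z : Fin 2 → K} (hz : z ≠ 0) (f : (Fin 2 → K) → A) :
    ∑ u with (of ![z, u]).det = 0, f u = ∑ a : K, f (a • z) := by
  have det_eq_zero_iff u : (of ![z, u]).det = 0 ↔ ∃ a : K, a • z = u := by
    rw [← not_iff_not, ← ne_eq, ← isUnit_iff_ne_zero, ← isUnit_iff_isUnit_det,
      ← linearIndependent_rows_iff_isUnit, not_exists]
    exact LinearIndependent.pair_iff' hz
  exact (Finset.sum_of_injOn (· • z) (smul_left_injective K hz).injOn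
    (by simp [det_eq_zero_iff]) (by simp [det_eq_zero_iff]) (by simp)).symm

end Sums

section CommSemiring

variable {σ R : Type*} [CommSemiring R]

theorem eval_smul_of_isHomogeneous_s3 {P : MvPolynomial σ R} {n : ℕ} (hP : P.IsHomogeneous n)
    (a : R) (z : σ → R) : eval (a • z) P = a ^ n * eval z P := by
  rw [eval_eq, eval_eq, Finset.mul_sum]
  refine Finset.sum_congr rfl fun d hd => ?_
  have degree_d : ∑ i ∈ d.support, d i = n := by
    rw [← hP (mem_support_iff.mp hd), ← Finsupp.degree_apply, Finsupp.degree_eq_weight_one,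
      Pi.one_def]
  simp only [Pi.smul_apply, smul_eq_mul, mul_pow, Finset.prod_mul_distrib,
    Finset.prod_pow_eq_pow_sum, degree_d]
  ring

theorem eval_aeval_sum_C_mul_X {τ : Type*} [Fintype τ] (M : Matrix τ σ R) (z : τ → R)
    (P : MvPolynomial σ R) :
    eval z (aeval (fun i => ∑ j, C (M j i) * X j) P) = eval (z ᵥ* M) P := by
  have eval_linear_form : (fun i => eval z (∑ j, C (M j i) * X j)) = z ᵥ* M := by
    ext i
    simp [vecMul, dotProduct, mul_comm]
  rw [← eval_linear_form]
  exact eval₂Hom_bind₁ _ _ _ P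

/-- The projection of the forms of degree `n` onto the line spanned by `X i ^ n`, along the other
monomials: the endomorphism `T` to which Higman's criterion is applied. The coefficient of `X i ^ n`
in `P` is encoded as the value of `P` at the `i`-th basis vector. -/
noncomputable def purePowerProj [DecidableEq σ] (i : σ) (n : ℕ) :
    Module.End R (homogeneousSubmodule σ R n) :=
  ((aeval (Pi.single i 1 : σ → R)).toLinearMap ∘ₗ (homogeneousSubmodule σ R n).subtype).smulRight
    ⟨X i ^ n, isHomogeneous_X_pow i n⟩

theorem eval_purePowerProj [DecidableEq σ] (i : σ) (n : ℕ) (P : homogeneousSubmodule σ R n)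
    (z : σ → R) :
    eval z (purePowerProj i n P).val = z i ^ n * eval (Pi.single i 1) P.val := by
  simp [purePowerProj, mul_comm, aeval_eq_eval]

end CommSemiring

section FiniteField

variable {K : Type*} [Field K] [Fintype K]

local notation "q" => Fintype.card K

theorem card_sub_one_ne_zero : q - 1 ≠ 0 :=
  Nat.sub_ne_zero_of_lt Fintype.one_lt_card

theorem pow_card_sub_one_eq_sub_ite [DecidableEq K] (x : K) :
    x ^ (q - 1) = 1 - if x = 0 then 1 else 0 := by
  split_ifs with hx
  · rw [hx, zero_pow card_sub_one_ne_zero, sub_self]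
  · rw [FiniteField.pow_card_sub_one_eq_one x hx, sub_zero]

theorem sum_pow_card_sub_one : ∑ x : K, x ^ (q - 1) = -1 := by
  classical
  simp [pow_card_sub_one_eq_sub_ite]

theorem vecMul_inv_apply_pow_card_sub_one {n : Type*} [Fintype n] [DecidableEq n] (g : GL n K)
    (z : n → K) (i : n) :
    (z ᵥ* g⁻¹.val) i ^ (q - 1) = (g.val.updateRow i z).det ^ (q - 1) := by
  have hdet : IsUnit g.val.det := (isUnit_iff_isUnit_det _).mp g.isUnit
  have cramer := congrFun (det_smul_inv_vecMul_eq_cramer_transpose g.val z hdet) i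
  rw [cramer_transpose_apply, Pi.smul_apply, smul_eq_mul] at cramer
  rw [← cramer, mul_pow, FiniteField.pow_card_sub_one_eq_one _ hdet.ne_zero, one_mul,
    coe_units_inv]

theorem sum_det_pow_mul_eval {P : MvPolynomial (Fin 2) K} (hP : P.IsHomogeneous (q - 1))
    (z : Fin 2 → K) : ∑ u, (of ![z, u]).det ^ (q - 1) * eval u P = eval z P := by
  classical
  have q_sub_one_ne_zero := card_sub_one_ne_zero (K := K)
  rcases eq_or_ne z 0 with rfl | hz
  · have eval_zero : eval 0 P = 0 := by
      rw [← zero_smul K 0, eval_smul_of_isHomogeneous_s3 hP, zero_pow q_sub_one_ne_zero, zero_mul]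
    rw [eval_zero]
    simp [q_sub_one_ne_zero, det_fin_two]
  have sum_eval : ∑ u, eval u P = 0 := by
    apply sum_eval_eq_zero
    have := hP.totalDegree_le
    rw [Fintype.card_fin]
    lia
  calc ∑ u, (of ![z, u]).det ^ (q - 1) * eval u P
      = ∑ u, eval u P - ∑ u with (of ![z, u]).det = 0, eval u P := by
        simp only [pow_card_sub_one_eq_sub_ite, sub_mul, one_mul, ite_mul, zero_mul,
          Finset.sum_sub_distrib, Finset.sum_filter]
    _ = -((∑ a : K, a ^ (q - 1)) * eval z P) := by
        simp only [sum_eval, sum_filter_det_eq_zero hz, eval_smul_of_isHomogeneous_s3 hP,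
          Finset.sum_mul, zero_sub]
    _ = eval z P := by rw [sum_pow_card_sub_one, neg_one_mul, neg_neg]

theorem sum_det_pow_mul_det_pow (u z : Fin 2 → K) :
    ∑ v, (of ![u, v]).det ^ (q - 1) * (of ![z, v]).det ^ (q - 1) =
      (of ![z, u]).det ^ (q - 1) := by
  let P : MvPolynomial (Fin 2) K := (C (z 0) * X 1 - C (z 1) * X 0) ^ (q - 1)
  have hP : P.IsHomogeneous (q - 1) := by
    have linear (i j : Fin 2) : (C (z i) * X j).IsHomogeneous 1 := (isHomogeneous_X K j).C_mul _
    simpa only [one_mul] using ((linear 0 1).sub (linear 1 0)).pow (q - 1)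
  have eval_P v : eval v P = (of ![z, v]).det ^ (q - 1) := by
    simp [P, det_fin_two]
  simpa only [eval_P] using sum_det_pow_mul_eval hP u

theorem sum_vecMul_inv_pow_mul_eval [Fintype (GL (Fin 2) K)] {P : MvPolynomial (Fin 2) K}
    (hP : P.IsHomogeneous (q - 1)) (z : Fin 2 → K) :
    ∑ g : GL (Fin 2) K, (z ᵥ* g⁻¹.val) 0 ^ (q - 1) * eval (g.val 0) P = eval z P := by
  let f (M : Matrix (Fin 2) (Fin 2) K) : K :=
    M.det ^ (q - 1) * (M.updateRow 0 z).det ^ (q - 1) * eval (M 0) P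
  have f_eq_zero M (hM : ¬IsUnit M) : f M = 0 := by
    rw [isUnit_iff_isUnit_det, isUnit_iff_ne_zero, not_not] at hM
    simp only [f, hM, zero_pow card_sub_one_ne_zero, zero_mul]
  have f_of u v : f (of ![u, v]) =
      (of ![u, v]).det ^ (q - 1) * (of ![z, v]).det ^ (q - 1) * eval u P := by
    have updateRow_of : (of ![u, v]).updateRow 0 z = of ![z, v] := by
      ext i j
      fin_cases i <;> rfl
    simp only [f, updateRow_of]
    rfl
  calc ∑ g : GL (Fin 2) K, (z ᵥ* g⁻¹.val) 0 ^ (q - 1) * eval (g.val 0) P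
      = ∑ g : GL (Fin 2) K, f g := by
        refine Finset.sum_congr rfl fun g _ => ?_
        have hdet : g.val.det ≠ 0 := g.det.ne_zero
        simp only [f, FiniteField.pow_card_sub_one_eq_one _ hdet, one_mul,
          vecMul_inv_apply_pow_card_sub_one]
    _ = ∑ u, (∑ v, (of ![u, v]).det ^ (q - 1) * (of ![z, v]).det ^ (q - 1)) * eval u P := by
        simp only [sum_units_eq_sum f f_eq_zero, sum_matrix_fin_two, f_of, Finset.sum_mul]
    _ = eval z P := by simp only [sum_det_pow_mul_det_pow, sum_det_pow_mul_eval hP]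

end FiniteField

theorem stmt3_general {K : Type*} [Field K] [Fintype K] {n : ℕ} (hn : n = Fintype.card K - 1)
    (ρ : Representation K (GL (Fin 2) K) (homogeneousSubmodule (Fin 2) K n))
    (hρ : ∀ g P, (ρ g P).val = aeval (fun i => ∑ j, C (g.val j i) * X j) P.val) :
    Module.Projective K[GL (Fin 2) K] ρ.asModule := by
  classical
  subst hn
  have eval_ρ g P z : eval z (ρ g P).val = eval (z ᵥ* g.val) P.val := by
    rw [hρ, eval_aeval_sum_C_mul_X]
  refine projective_asModule_of_sum_conj_eq_one ρ (purePowerProj 0 _) ?_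
  refine LinearMap.ext fun P => Subtype.ext ?_
  refine IsHomogeneous.funext_of_le_card ((mem_homogeneousSubmodule _ _).mp (Subtype.prop _))
    P.prop (fun z => ?_) (by simp)
  rw [Module.End.one_apply, ← sum_vecMul_inv_pow_mul_eval P.prop z]
  simp [eval_ρ, eval_purePowerProj, row_def]

/-- `V_{p−1}` is a projective module over the group algebra
`𝔽_p[GL₂(𝔽_p)]`. -/
theorem stmt3 (p : ℕ) [Fact p.Prime] :
    Module.Projective (MonoidAlgebra (ZMod p) (GL (Fin 2) (ZMod p))) (rhoV p).asModule :=
  stmt3_general (by rw [ZMod.card]) (rhoV p) fun _ _ => rfl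
end
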